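/- The Julia set of f in ℚ₂ equals the set of points whose entire forward orbit stays in 4ℤ₂ ∪ (1 + 4ℤ₂): J(f) = {x ∈ ℚ₂ : f^[n](x) ∈ 4ℤ₂ ∪ (1 + 4ℤ₂) for all n ≥ 0} = ⋂_{n≥0} (f^[n])^{−1}(4ℤ₂ ∪ (1 + 4ℤ₂)). -/

import Mathlib

open Function Set

/-- The cubic polynomial `f(x) = (9/4)·x·(x−1)²` acting on `ℚ₂`. -/
noncomputable def f : ℚ_[2] → ℚ_[2] := fun x => (9 / 4 : ℚ_[2]) * x * (x - 1) ^ 2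

/-- The spherical distance `ρ(x,y) = |x−y|₂ / (max(|x|₂,1)·max(|y|₂,1))` on `ℚ₂`. -/
noncomputable def rho (x y : ℚ_[2]) : ℝ := ‖x - y‖ / (max ‖x‖ 1 * max ‖y‖ 1)

/-- `x` is a Fatou point of `f` in `ℚ₂`: the family of iterates of `f` is
equicontinuous at `x` with respect to the spherical distance `ρ`. -/
def fatou (x : ℚ_[2]) : Prop :=
  ∀ ε : ℝ, 0 < ε → ∃ δ : ℝ, 0 < δ ∧
    ∀ y : ℚ_[2], ‖y - x‖ < δ → ∀ n : ℕ, rho (f^[n] x) (f^[n] y) < ε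

lemma na (a b : ℚ_[2]) (t : ℝ) (ha : ‖a‖ ≤ t) (hb : ‖b‖ ≤ t) : ‖a + b‖ ≤ t :=
  (Padic.nonarchimedean a b).trans (max_le ha hb)

lemma na_sub (a b : ℚ_[2]) (t : ℝ) (ha : ‖a‖ ≤ t) (hb : ‖b‖ ≤ t) : ‖a - b‖ ≤ t := by
  rw [sub_eq_add_neg]; exact na _ _ _ ha (by rwa [norm_neg])

lemma dom (a b : ℚ_[2]) (h : ‖b‖ < ‖a‖) : ‖a + b‖ = ‖a‖ := by
  rw [Padic.add_eq_max_of_ne h.ne', max_eq_left h.le]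

lemma dom_sub (a b : ℚ_[2]) (h : ‖b‖ < ‖a‖) : ‖a - b‖ = ‖a‖ := by
  rw [sub_eq_add_neg]; exact dom _ _ (by rwa [norm_neg])

lemma n2 : ‖(2 : ℚ_[2])‖ = 1 / 2 := by
  have := Padic.norm_p (p := 2)
  simpa using this

lemma n4 : ‖(4 : ℚ_[2])‖ = 1 / 4 := by
  rw [show (4 : ℚ_[2]) = 2 * 2 by norm_num, norm_mul, n2]; norm_num

lemma n8 : ‖(8 : ℚ_[2])‖ = 1 / 8 := by
  rw [show (8 : ℚ_[2]) = 4 * 2 by norm_num, norm_mul, n2, n4]; norm_num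

lemma n9 : ‖(9 : ℚ_[2])‖ = 1 := by
  rw [show (9 : ℚ_[2]) = 1 + 8 by norm_num, dom, norm_one]
  rw [n8, norm_one]; norm_num

lemma n94 : ‖(9 / 4 : ℚ_[2])‖ = 4 := by
  rw [norm_div, n9, n4]; norm_num

lemma gap (u v : ℚ_[2]) (h : ‖u‖ < ‖v‖) : ‖u‖ ≤ ‖v‖ / 2 := by
  by_cases hu : u = 0
  · subst hu; rw [norm_zero]; positivity
  have hv : v ≠ 0 := by
    rintro rfl
    rw [norm_zero] at h
    exact absurd h (not_lt.2 (norm_nonneg _))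
  obtain ⟨m, hm⟩ := Padic.padicNormE.image hu
  obtain ⟨n, hn⟩ := Padic.padicNormE.image hv
  push_cast at hm hn
  rw [hm, hn] at h
  rw [hm, hn]
  have h1 : -m < -n := (zpow_lt_zpow_iff_right₀ (by norm_num : (1 : ℝ) < 2)).1 h
  have h2 : (2 : ℝ) ^ (-n) / 2 = 2 ^ (-n - 1) := by
    rw [zpow_sub₀ (by norm_num)]; norm_num
  rw [h2]
  exact zpow_le_zpow_right₀ (by norm_num) (by omega)

lemma unit_sub_one (w : ℚ_[2]) (h : ‖w‖ = 1) : ‖w - 1‖ < 1 := by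
  let z : ℤ_[2] := ⟨w, h.le⟩
  obtain ⟨n, hn, hz⟩ := PadicInt.exists_mem_range z
  rw [IsLocalRing.mem_maximalIdeal, PadicInt.mem_nonunits] at hz
  have hn' : n = 0 ∨ n = 1 := by omega
  rcases hn' with rfl | rfl
  · exfalso
    have : ‖w - 0‖ < 1 := by
      rw [PadicInt.norm_def] at hz
      push_cast at hz
      exact hz
    rw [sub_zero, h] at this
    exact lt_irrefl _ this
  · rw [PadicInt.norm_def] at hz
    push_cast at hz
    exact hz

lemma eq_sub (u v : ℚ_[2]) (hu : u ≠ 0) (h : ‖u‖ = ‖v‖) : ‖u - v‖ ≤ ‖u‖ / 2 := by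
  apply gap
  have h0 : 0 < ‖u‖ := norm_pos_iff.2 hu
  have h1 := unit_sub_one (v / u) (by rw [norm_div, ← h, div_self h0.ne'])
  have h2 : u - v = -(u * (v / u - 1)) := by field_simp; ring
  rw [h2, norm_neg, norm_mul]
  nlinarith

lemma unit_add (w w' : ℚ_[2]) (h : ‖w‖ = 1) (h' : ‖w'‖ = 1) : ‖w + w'‖ ≤ 1 / 2 := by
  have := eq_sub w (-w') (by rintro rfl; simp at h) (by rw [norm_neg, h, h'])
  rwa [sub_neg_eq_add, h] at this

lemma norm_f (x : ℚ_[2]) : ‖f x‖ = 4 * ‖x‖ * ‖x - 1‖ ^ 2 := by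
  simp only [f, norm_mul, norm_pow, n94]

lemma diff_f (x y : ℚ_[2]) :
    ‖f x - f y‖ = 4 * ‖x - y‖ * ‖x ^ 2 + x * y + y ^ 2 - 2 * (x + y) + 1‖ := by
  rw [show f x - f y = (9 / 4) * (x - y) * (x ^ 2 + x * y + y ^ 2 - 2 * (x + y) + 1) by
    simp only [f]; ring]
  simp only [norm_mul, n94]

lemma diff_f' (x y : ℚ_[2]) :
    ‖f x - f y‖ = 4 * ‖x - y‖ *
      ‖((x - 1) + (y - 1)) * (1 + ((x - 1) + (y - 1))) - (x - 1) * (y - 1)‖ := by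
  rw [diff_f]; congr 2; ring

lemma f_cont : Continuous f := by unfold f; fun_prop

lemma sub_one_of_small (x : ℚ_[2]) (h : ‖x‖ < 1) : ‖x - 1‖ = 1 := by
  rw [norm_sub_rev, dom_sub, norm_one]; rwa [norm_one]

lemma norm_one_of (x : ℚ_[2]) (h : ‖x - 1‖ < 1) : ‖x‖ = 1 := by
  have := dom 1 (x - 1) (by rwa [norm_one])
  rw [norm_one] at this
  rw [← this]; congr 1; ring

/-! Fatou side -/

lemma rho_le (x y : ℚ_[2]) : rho x y ≤ ‖x - y‖ := by
  unfold rho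
  have h1 : (1 : ℝ) ≤ max ‖x‖ 1 := le_max_right _ _
  have h2 : (1 : ℝ) ≤ max ‖y‖ 1 := le_max_right _ _
  apply div_le_self (norm_nonneg _)
  nlinarith

lemma fatou_of_f (x : ℚ_[2]) (h : fatou (f x)) : fatou x := by
  intro ε hε
  obtain ⟨δ, hδ, H⟩ := h ε hε
  obtain ⟨η, hη, H'⟩ := Metric.continuous_iff.1 f_cont x δ hδ
  refine ⟨min η ε, lt_min hη hε, fun y hy n => ?_⟩
  cases n with
  | zero =>
    refine (rho_le _ _).trans_lt ?_
    simp only [iterate_zero, id]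
    rw [norm_sub_rev]
    exact hy.trans_le (min_le_right _ _)
  | succ n =>
    simp only [iterate_succ_apply]
    apply H
    rw [← dist_eq_norm]
    apply H'
    rw [dist_eq_norm]
    exact hy.trans_le (min_le_left _ _)

lemma fatou_of_iter (n : ℕ) : ∀ x : ℚ_[2], fatou (f^[n] x) → fatou x := by
  induction n with
  | zero => intro x h; exact h
  | succ n ih =>
    intro x h
    rw [iterate_succ_apply] at h
    exact fatou_of_f x (ih _ h)

lemma big_step (x : ℚ_[2]) (h : 1 < ‖x‖) : ‖f x‖ = 4 * ‖x‖ ^ 3 := by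
  rw [norm_f, dom_sub x 1 (by rwa [norm_one])]; ring

lemma big_inv (δ : ℝ) (hδ : 0 ≤ δ) (n : ℕ) : ∀ x y : ℚ_[2], 1 < ‖x‖ → ‖x‖ = ‖y‖ →
    ‖x - y‖ ≤ δ * ‖x‖ ^ 2 → rho (f^[n] x) (f^[n] y) ≤ δ := by
  induction n with
  | zero =>
    intro x y hx hxy h
    simp only [iterate_zero, id]
    unfold rho
    rw [← hxy, max_eq_left hx.le, div_le_iff₀ (by positivity)]
    rwa [← pow_two]
  | succ n ih =>
    intro x y hx hxy h
    simp only [iterate_succ_apply]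
    have h1 := big_step x hx
    have h2 := big_step y (hxy ▸ hx)
    have hp : 1 < ‖x‖ ^ 3 := one_lt_pow₀ hx (by norm_num)
    apply ih
    · rw [h1]; linarith
    · rw [h1, h2, hxy]
    · rw [diff_f, h1]
      have hxx : ‖x‖ ≤ ‖x‖ ^ 2 := by nlinarith
      have hq : ‖x ^ 2 + x * y + y ^ 2 - 2 * (x + y) + 1‖ ≤ ‖x‖ ^ 2 := by
        apply na
        · apply na_sub
          · apply na
            · apply na
              · rw [norm_pow]
              · rw [norm_mul, ← hxy, pow_two]
            · rw [norm_pow, ← hxy]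
          · rw [norm_mul, n2]
            have := na x y ‖x‖ le_rfl hxy.ge
            linarith
        · rw [norm_one]; nlinarith
      calc 4 * ‖x - y‖ * ‖x ^ 2 + x * y + y ^ 2 - 2 * (x + y) + 1‖
          ≤ 4 * (δ * ‖x‖ ^ 2) * ‖x‖ ^ 2 := by gcongr
        _ = δ * (4 * ‖x‖ ^ 4) := by ring
        _ ≤ δ * (4 * ‖x‖ ^ 3) ^ 2 := by
          gcongr
          have : ‖x‖ ^ 4 ≤ ‖x‖ ^ 6 := pow_le_pow_right₀ hx.le (by norm_num)
          have h6 : 0 ≤ ‖x‖ ^ 6 := by positivity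
          calc 4 * ‖x‖ ^ 4 ≤ 16 * ‖x‖ ^ 6 := by linarith
            _ = _ := by ring

lemma fatou_big (x : ℚ_[2]) (hx : 1 < ‖x‖) : fatou x := by
  intro ε hε
  refine ⟨min 1 (ε / 2), by positivity, fun y hy n => ?_⟩
  have h1 : ‖y - x‖ < 1 := hy.trans_le (min_le_left _ _)
  have h2 : ‖y - x‖ < ε / 2 := hy.trans_le (min_le_right _ _)
  have h3 : ‖y‖ = ‖x‖ := by
    have := dom x (y - x) (h1.trans hx)
    rw [← this]; congr 1; ring
  have := big_inv (ε / 2) (by positivity) n x y hx h3.symm (by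
    rw [norm_sub_rev]
    have hq : 1 < ‖x‖ ^ 2 := one_lt_pow₀ hx (by norm_num)
    nlinarith)
  linarith

lemma c_step (x : ℚ_[2]) (h : ‖x - 1‖ = 1 / 2) : ‖f x - 1‖ = 1 / 2 := by
  obtain ⟨w, rfl⟩ : ∃ w, x = 1 + 2 * w := ⟨(x - 1) / 2, by ring⟩
  have hw : ‖w‖ = 1 := by
    rw [add_sub_cancel_left, norm_mul, n2] at h; linarith
  have e : f (1 + 2 * w) - 1 = 2 * (9 * w ^ 3) + (8 * w ^ 2 + (w + 1) * (w + (-1))) := by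
    simp only [f]; ring
  have a : ‖2 * (9 * w ^ 3)‖ = 1 / 2 := by
    rw [norm_mul, norm_mul, norm_pow, n2, n9, hw]; norm_num
  have b : ‖8 * w ^ 2 + (w + 1) * (w + (-1))‖ ≤ 1 / 4 := by
    apply na
    · rw [norm_mul, norm_pow, n8, hw]; norm_num
    · rw [norm_mul]
      have h1 := unit_add w 1 hw norm_one
      have h2 := unit_add w (-1) hw (by rw [norm_neg, norm_one])
      nlinarith [norm_nonneg (w + 1), norm_nonneg (w + -1)]
  rw [e, dom _ _ (by rw [a]; linarith), a]

lemma c_lip (x y : ℚ_[2]) (h : ‖x - 1‖ = 1 / 2) (h' : ‖y - 1‖ = 1 / 2) :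
    ‖f x - f y‖ ≤ ‖x - y‖ := by
  rw [diff_f']
  have e : ‖((x - 1) + (y - 1)) * (1 + ((x - 1) + (y - 1))) - (x - 1) * (y - 1)‖ ≤ 1 / 4 := by
    have hs : ‖(x - 1) + (y - 1)‖ ≤ 1 / 4 := by
      have := eq_sub (x - 1) (-(y - 1)) (by intro h0; rw [h0] at h; simp at h)
        (by rw [norm_neg, h, h'])
      rw [sub_neg_eq_add, h] at this
      linarith
    apply na_sub
    · rw [norm_mul]
      have : ‖1 + ((x - 1) + (y - 1))‖ ≤ 1 := na _ _ _ norm_one.le (by linarith)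
      nlinarith [norm_nonneg ((x - 1) + (y - 1))]
    · rw [norm_mul, h, h']; norm_num
  nlinarith [norm_nonneg (x - y)]

lemma c_inv (n : ℕ) : ∀ x y : ℚ_[2], ‖x - 1‖ = 1 / 2 → ‖y - 1‖ = 1 / 2 →
    ‖f^[n] x - f^[n] y‖ ≤ ‖x - y‖ := by
  induction n with
  | zero => intro x y _ _; exact le_rfl
  | succ n ih =>
    intro x y h h'
    simp only [iterate_succ_apply]
    exact (ih _ _ (c_step x h) (c_step y h')).trans (c_lip x y h h')

lemma fatou_c (x : ℚ_[2]) (h : ‖x - 1‖ = 1 / 2) : fatou x := by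
  intro ε hε
  refine ⟨min (1 / 2) ε, by positivity, fun y hy n => ?_⟩
  have h1 : ‖y - x‖ < 1 / 2 := hy.trans_le (min_le_left _ _)
  have h2 : ‖y - x‖ < ε := hy.trans_le (min_le_right _ _)
  have h3 : ‖y - 1‖ = 1 / 2 := by
    have := dom (x - 1) (y - x) (by rwa [h])
    rw [← h, ← this]; congr 1; ring
  refine ((rho_le _ _).trans (c_inv n x y h h3)).trans_lt ?_
  rwa [norm_sub_rev]

lemma fatou_out (x : ℚ_[2]) (hA : ¬ ‖x‖ ≤ 1 / 4) (hB : ¬ ‖x - 1‖ ≤ 1 / 4) : fatou x := by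
  push Not at hA hB
  have key : ∀ u : ℚ_[2], ‖u‖ < 1 → 1 / 4 < ‖u‖ → ‖u‖ = 1 / 2 := by
    intro u h1 h2
    apply le_antisymm
    · have := gap u 1 (by rwa [norm_one])
      rwa [norm_one] at this
    · have := gap 4 u (by rwa [n4])
      rw [n4] at this; linarith
  rcases lt_trichotomy ‖x‖ 1 with h | h | h
  · have h2 := key x h hA
    apply fatou_of_f
    apply fatou_big
    rw [norm_f, sub_one_of_small x h, h2]; norm_num
  · exact fatou_c x (key _ (unit_sub_one x h) hB)
  · exact fatou_big x h

/-! Julia side -/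

def KK (x : ℚ_[2]) : Prop := ∀ n : ℕ, ‖f^[n] x‖ ≤ 1 / 4 ∨ ‖f^[n] x - 1‖ ≤ 1 / 4

lemma KK.iter {x : ℚ_[2]} (h : KK x) (k : ℕ) : KK (f^[k] x) := by
  intro n
  rw [← iterate_add_apply]
  exact h _

lemma KK.le_one {x : ℚ_[2]} (h : KK x) : ‖x‖ ≤ 1 := by
  rcases h 0 with h | h
  · simp only [iterate_zero, id] at h; linarith
  · exact (norm_one_of x (by simp only [iterate_zero, id] at h; linarith)).le

def Separ (x y : ℚ_[2]) : Prop := ∃ n : ℕ, 1 / 8 ≤ ‖f^[n] x - f^[n] y‖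

lemma Separ.of_iter {x y : ℚ_[2]} (k : ℕ) (h : Separ (f^[k] x) (f^[k] y)) : Separ x y := by
  obtain ⟨n, hn⟩ := h
  refine ⟨n + k, ?_⟩
  rwa [iterate_add_apply, iterate_add_apply]

lemma a_step (x : ℚ_[2]) (h : ‖x‖ ≤ 1 / 4) : ‖f x‖ = 4 * ‖x‖ := by
  rw [norm_f, sub_one_of_small x (by linarith)]; ring

lemma a_diff (x y : ℚ_[2]) (h : ‖x‖ ≤ 1 / 4) (h' : ‖y‖ ≤ 1 / 4) :
    ‖f x - f y‖ = 4 * ‖x - y‖ := by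
  rw [diff_f]
  have : ‖x ^ 2 + x * y + y ^ 2 - 2 * (x + y) + 1‖ = 1 := by
    rw [add_comm, dom, norm_one]
    rw [norm_one]
    have hx := norm_nonneg x
    have hy := norm_nonneg y
    refine lt_of_le_of_lt (b := 1 / 4) ?_ (by norm_num)
    apply na_sub
    · apply na
      · apply na
        · rw [norm_pow]; nlinarith
        · rw [norm_mul]; nlinarith
      · rw [norm_pow]; nlinarith
    · rw [norm_mul, n2]
      have := na x y _ h h'
      linarith
  rw [this, mul_one]

lemma reach_aux (N : ℕ) : ∀ x : ℚ_[2], KK x → x ≠ 0 → (1 / 4 : ℝ) ^ N ≤ ‖x‖ →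
    ∃ k, ‖f^[k] x - 1‖ ≤ 1 / 4 ∧
      ∀ y, Separ x y ∨ ‖f^[k] x - f^[k] y‖ = ‖x - y‖ / ‖x‖ := by
  induction N with
  | zero =>
    intro x hK hx h
    rw [pow_zero] at h
    rcases hK 0 with h0 | h0
    · simp only [iterate_zero, id] at h0; linarith
    · refine ⟨0, h0, fun y => Or.inr ?_⟩
      rw [le_antisymm hK.le_one h, div_one]; rfl
  | succ N ih =>
    intro x hK hx h
    rcases hK 0 with h0 | h0
    · simp only [iterate_zero, id] at h0
      have hf := a_step x h0
      have hx0 : 0 < ‖x‖ := norm_pos_iff.2 hx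
      obtain ⟨k, hk, H⟩ := ih (f x) (hK.iter 1)
        (norm_pos_iff.1 (by rw [hf]; linarith)) (by rw [hf]; rw [pow_succ] at h; linarith)
      refine ⟨k + 1, hk, fun y => ?_⟩
      by_cases hxy : 1 / 8 ≤ ‖x - y‖
      · exact Or.inl ⟨0, hxy⟩
      push Not at hxy
      have hy : ‖y‖ ≤ 1 / 4 := by
        have := na_sub x (x - y) (1 / 4) h0 (by linarith)
        rwa [sub_sub_cancel] at this
      rcases H (f y) with h1 | h1
      · exact Or.inl (Separ.of_iter 1 h1)
      · right
        rw [iterate_succ_apply, iterate_succ_apply, h1, a_diff x y h0 hy, hf]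
        exact mul_div_mul_left _ _ (by norm_num)
    · refine ⟨0, h0, fun y => Or.inr ?_⟩
      simp only [iterate_zero, id] at h0
      rw [norm_one_of x (by linarith), div_one]; rfl

lemma reach (x : ℚ_[2]) (hK : KK x) (hx : x ≠ 0) :
    ∃ k, ‖f^[k] x - 1‖ ≤ 1 / 4 ∧
      ∀ y, Separ x y ∨ ‖f^[k] x - f^[k] y‖ = ‖x - y‖ / ‖x‖ := by
  obtain ⟨N, hN⟩ := exists_pow_lt_of_lt_one (norm_pos_iff.2 hx) (by norm_num : (1 / 4 : ℝ) < 1)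
  exact reach_aux N x hK hx hN.le

def T (x c : ℚ_[2]) : Prop :=
  (∀ y, ‖x - y‖ = ‖c‖ → Separ x y) ∨ (∀ y, ‖x - y‖ = ‖c‖ / 2 → Separ x y)

/-- distances on the disk around one -/
lemma b_diff (x y : ℚ_[2]) (hx : ‖x - 1‖ ≤ 1 / 4) (h0 : x - 1 ≠ 0)
    (h : ‖x - y‖ ≤ ‖x - 1‖ / 4) : ‖f x - f y‖ = 2 * ‖x - 1‖ * ‖x - y‖ := by
  have hp : 0 < ‖x - 1‖ := norm_pos_iff.2 h0
  have hy : ‖y - 1‖ = ‖x - 1‖ := by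
    have := dom_sub (x - 1) (x - y) (by linarith)
    rw [← this]; congr 1; ring
  have e : (x - 1) + (y - 1) = 2 * (x - 1) - (x - y) := by ring
  have hs : ‖(x - 1) + (y - 1)‖ = ‖x - 1‖ / 2 := by
    have h2 : ‖2 * (x - 1)‖ = ‖x - 1‖ / 2 := by rw [norm_mul, n2]; ring
    rw [e, dom_sub _ _ (by rw [h2]; linarith), h2]
  have hm : ‖((x - 1) + (y - 1)) * (1 + ((x - 1) + (y - 1)))‖ = ‖x - 1‖ / 2 := by
    rw [norm_mul, dom 1 _ (by rw [hs, norm_one]; linarith), norm_one, hs, mul_one]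
  rw [diff_f', dom_sub (_ * _) (_ * _), hm]
  · ring
  · rw [hm, norm_mul, hy]; nlinarith

lemma b_far (x y : ℚ_[2]) (hx : ‖x - 1‖ ≤ 1 / 4) (h0 : x - 1 ≠ 0)
    (hy : ‖x - y‖ < 1 / 8) (h : ‖x - 1‖ ≤ ‖x - y‖) : 4 * ‖x - 1‖ ^ 2 ≤ ‖f x - f y‖ := by
  have hp : 0 < ‖x - 1‖ := norm_pos_iff.2 h0
  have hne : ‖x - 1‖ ≠ ‖y - 1‖ := by
    intro he
    have := eq_sub _ _ h0 he
    rw [sub_sub_sub_cancel_right] at this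
    linarith
  have hs : ‖(x - 1) + (y - 1)‖ = ‖x - y‖ := by
    rw [Padic.add_eq_max_of_ne hne]
    have := Padic.add_eq_max_of_ne (q := x - 1) (r := -(y - 1)) (by rwa [norm_neg])
    rw [norm_neg] at this
    rw [← this]; congr 1; ring
  have hy1 : ‖y - 1‖ ≤ ‖x - y‖ := by
    have := na_sub (x - 1) (x - y) _ h le_rfl
    rwa [sub_sub_sub_cancel_left] at this
  have hm : ‖((x - 1) + (y - 1)) * (1 + ((x - 1) + (y - 1)))‖ = ‖x - y‖ := by
    rw [norm_mul, dom 1 _ (by rw [hs, norm_one]; linarith), norm_one, hs, mul_one]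
  rw [diff_f', dom_sub (_ * _) (_ * _), hm]
  · nlinarith
  · rw [hm, norm_mul]; nlinarith [norm_nonneg (y - 1)]

lemma b_norm (x : ℚ_[2]) (hx : ‖x - 1‖ ≤ 1 / 4) : ‖f x‖ = 4 * ‖x - 1‖ ^ 2 := by
  rw [norm_f, norm_one_of x (by linarith)]; ring

lemma mainB (N : ℕ) : ∀ x c : ℚ_[2], KK x → (∀ n, f^[n] x ≠ 0) → ‖x - 1‖ ≤ 1 / 4 →
    (1 / 2 : ℝ) ^ N ≤ ‖c‖ → T x c := by
  induction N with
  | zero =>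
    intro x c hK hn hx hc
    rw [pow_zero] at hc
    exact Or.inl fun y hy => ⟨0, by simp only [iterate_zero, id]; linarith⟩
  | succ N ih =>
    intro x c hK hn hx hc
    by_cases hc8 : 1 / 8 ≤ ‖c‖
    · exact Or.inl fun y hy => ⟨0, by simp only [iterate_zero, id]; linarith⟩
    push Not at hc8
    have hfx : f x ≠ 0 := hn 1
    have h0 : x - 1 ≠ 0 := by
      intro h; apply hfx; simp only [f]; rw [h]; ring
    have hp : 0 < ‖x - 1‖ := norm_pos_iff.2 h0
    obtain ⟨k, hk, H⟩ := reach (f x) (hK.iter 1) hfx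
    have hfn := b_norm x hx
    have far : ∀ y, ‖x - 1‖ ^ 2 / 2 ≤ ‖f x - f y‖ → Separ x y := by
      intro y hy
      rcases H (f y) with h | h
      · exact Separ.of_iter 1 h
      · refine Separ.of_iter 1 ⟨k, ?_⟩
        simp only [iterate_one]
        rw [h, hfn, le_div_iff₀ (by positivity)]
        linarith
    rcases le_or_gt ‖x - 1‖ ‖c‖ with h1 | h1
    · left
      intro y hy
      apply far
      have := b_far x y hx h0 (by rwa [hy]) (by rwa [hy])
      nlinarith
    · have h2 := gap _ _ h1
      rcases h2.eq_or_lt with h2 | h2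
      · right
        intro y hy
        apply far
        rw [b_diff x y hx h0 (by rw [hy]; linarith), hy, h2]
        nlinarith
      · have h3 : ‖c‖ ≤ ‖x - 1‖ / 4 := by
          have := gap c (2 * (x - 1)) (by rw [norm_mul, n2]; linarith)
          rw [norm_mul, n2] at this
          linarith
        have hc' : ‖2 * c / (x - 1)‖ = ‖c‖ / (2 * ‖x - 1‖) := by
          rw [norm_div, norm_mul, n2]; field_simp
        have hT := ih (f^[k] (f x)) (2 * c / (x - 1)) ((hK.iter 1).iter k)
          (fun n => by
            have := hn (n + (k + 1))
            rwa [iterate_add_apply, iterate_succ_apply] at this) hk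
          (by
            rw [hc', le_div_iff₀ (by positivity)]
            rw [pow_succ] at hc
            have : (0 : ℝ) < (1 / 2) ^ N := by positivity
            nlinarith)
        have tr : ∀ y, ‖x - y‖ ≤ ‖x - 1‖ / 4 →
            Separ x y ∨ ‖f^[k] (f x) - f^[k] (f y)‖ = ‖x - y‖ / (2 * ‖x - 1‖) := by
          intro y hy
          rcases H (f y) with h | h
          · exact Or.inl (Separ.of_iter 1 h)
          · right
            rw [h, hfn, b_diff x y hx h0 hy]
            field_simp
            ring
        rcases hT with hT | hT
        · left
          intro y hy
          rcases tr y (by rwa [hy]) with h | h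
          · exact h
          · exact Separ.of_iter (k + 1) (hT _ (by rw [iterate_succ_apply, h, hy, hc']))
        · right
          intro y hy
          rcases tr y (by rw [hy]; linarith) with h | h
          · exact h
          · exact Separ.of_iter (k + 1) (hT _ (by rw [iterate_succ_apply, h, hy, hc']; ring))

lemma main_T (x c : ℚ_[2]) (hK : KK x) (hn : ∀ n, f^[n] x ≠ 0) (hc : c ≠ 0) : T x c := by
  have hx : x ≠ 0 := hn 0
  obtain ⟨k, hk, H⟩ := reach x hK hx
  have hc' : c / x ≠ 0 := div_ne_zero hc hx
  obtain ⟨N, hN⟩ := exists_pow_lt_of_lt_one (norm_pos_iff.2 hc') (by norm_num : (1 / 2 : ℝ) < 1)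
  rcases mainB N (f^[k] x) (c / x) (hK.iter k)
    (fun n => by rw [← iterate_add_apply]; exact hn _) hk hN.le with hT | hT
  · left
    intro y hy
    rcases H y with h | h
    · exact h
    · exact Separ.of_iter k (hT _ (by rw [h, hy, norm_div]))
  · right
    intro y hy
    rcases H y with h | h
    · exact h
    · exact Separ.of_iter k (hT _ (by rw [h, hy, norm_div]; ring))

lemma rho_ge (x y : ℚ_[2]) (hx : ‖x‖ ≤ 1) (h : 1 / 8 ≤ ‖x - y‖) : 1 / 8 ≤ rho x y := by
  unfold rho
  rw [max_eq_right hx, one_mul]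
  rcases le_or_gt ‖y‖ 1 with hy | hy
  · rwa [max_eq_right hy, div_one]
  · rw [norm_sub_rev, dom_sub y x (by linarith), max_eq_left hy.le, div_self (by linarith)]
    norm_num

lemma not_fatou_of_sep (x : ℚ_[2]) (hK : KK x)
    (h : ∀ δ : ℝ, 0 < δ → ∃ y, ‖y - x‖ < δ ∧ Separ x y) : ¬ fatou x := by
  intro hF
  obtain ⟨δ, hδ, H⟩ := hF (1 / 8) (by norm_num)
  obtain ⟨y, hy, n, hn⟩ := h δ hδ
  have := H y hy n
  have := rho_ge _ _ (hK.iter n).le_one hn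
  linarith

lemma grow (N : ℕ) : ∀ y : ℚ_[2], (1 / 4 : ℝ) ^ N ≤ ‖y‖ → ∃ k, 1 / 8 ≤ ‖f^[k] y‖ := by
  induction N with
  | zero => intro y h; exact ⟨0, by rw [pow_zero] at h; simp only [iterate_zero, id]; linarith⟩
  | succ N ih =>
    intro y h
    by_cases hy : 1 / 8 ≤ ‖y‖
    · exact ⟨0, hy⟩
    push Not at hy
    obtain ⟨k, hk⟩ := ih (f y) (by rw [a_step y (by linarith)]; rw [pow_succ] at h; linarith)
    exact ⟨k + 1, hk⟩

lemma f_zero (n : ℕ) : f^[n] 0 = 0 := by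
  apply iterate_fixed; simp [f]

open Polynomial in
lemma fiber (b : ℚ_[2]) : (f ⁻¹' {b}).Finite := by
  classical
  let P : ℚ_[2][X] := C (9 / 4) * X * (X - 1) ^ 2 - C b
  have hP : P ≠ 0 := by
    intro h
    have e0 : P.eval 0 = 0 := by rw [h]; simp
    have e1 : P.eval 2 = 0 := by rw [h]; simp
    simp only [P, eval_sub, eval_mul, eval_C, eval_X, eval_pow, eval_one] at e0 e1
    have : (9 / 2 : ℚ_[2]) = 0 := by linear_combination e1 - e0
    norm_num at this
  apply P.roots.toFinset.finite_toSet.subset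
  intro x hx
  simp only [mem_preimage, mem_singleton_iff, f] at hx
  simp only [Finset.mem_coe, Multiset.mem_toFinset, mem_roots hP, IsRoot.def]
  simp only [P, eval_sub, eval_mul, eval_C, eval_X, eval_pow, eval_one]
  rw [hx, sub_self]

lemma fiber_iter (n : ℕ) : (f^[n] ⁻¹' {0}).Finite := by
  induction n with
  | zero => simp
  | succ n ih =>
    rw [iterate_succ, preimage_comp]
    exact ih.preimage' fun b _ => fiber b

lemma not_fatou (x : ℚ_[2]) (hK : KK x) : ¬ fatou x := by
  apply not_fatou_of_sep x hK
  intro δ hδ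
  by_cases hn : ∀ n, f^[n] x ≠ 0
  · obtain ⟨N, hN⟩ := exists_pow_lt_of_lt_one hδ (by norm_num : (1 / 2 : ℝ) < 1)
    have hc : ‖(2 : ℚ_[2]) ^ N‖ < δ := by rwa [norm_pow, n2]
    rcases main_T x (2 ^ N) hK hn (pow_ne_zero _ two_ne_zero) with h | h
    · exact ⟨x + 2 ^ N, by rwa [add_sub_cancel_left], h _ (by simp)⟩
    · have e : ‖(2 : ℚ_[2]) ^ N * 2‖ = ‖(2 : ℚ_[2]) ^ N‖ / 2 := by rw [norm_mul, n2]; ring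
      refine ⟨x + 2 ^ N * 2, ?_, h _ ?_⟩
      · rw [add_sub_cancel_left, e]
        linarith [norm_nonneg ((2 : ℚ_[2]) ^ N)]
      · rw [sub_add_cancel_left, norm_neg, e]
  · push Not at hn
    obtain ⟨m, hm⟩ := hn
    obtain ⟨y, hy, hy'⟩ :=
      (infinite_of_mem_nhds x (Metric.ball_mem_nhds x hδ)).exists_notMem_finite (fiber_iter m)
    have hy0 : f^[m] y ≠ 0 := hy'
    rw [Metric.mem_ball, dist_eq_norm] at hy
    obtain ⟨N, hN⟩ := exists_pow_lt_of_lt_one (norm_pos_iff.2 hy0)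
      (by norm_num : (1 / 4 : ℝ) < 1)
    obtain ⟨k, hk⟩ := grow N _ hN.le
    refine ⟨y, hy, Separ.of_iter m ⟨k, ?_⟩⟩
    rwa [hm, f_zero, zero_sub, norm_neg]

lemma fatou_iff (x : ℚ_[2]) : ¬ fatou x ↔ KK x := by
  refine ⟨fun h => ?_, not_fatou x⟩
  by_contra hK
  unfold KK at hK
  push Not at hK
  obtain ⟨n, h1, h2⟩ := hK
  exact h (fatou_of_iter n x (fatou_out _ (not_le.2 h1) (not_le.2 h2)))

/-- The Julia set of `f` in `ℚ₂` equals the set of points whose entire forward orbit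
stays in `4ℤ₂ ∪ (1 + 4ℤ₂)`. -/
theorem stmt14 :
    ({x : ℚ_[2] | ¬ fatou x} =
      {x : ℚ_[2] | ∀ n : ℕ,
        f^[n] x ∈ {y : ℚ_[2] | ‖y‖ ≤ (1 / 2 : ℝ) ^ 2} ∪
          {y : ℚ_[2] | ‖y - 1‖ ≤ (1 / 2 : ℝ) ^ 2}}) ∧
    ({x : ℚ_[2] | ¬ fatou x} =
      ⋂ n : ℕ, f^[n] ⁻¹'
        ({y : ℚ_[2] | ‖y‖ ≤ (1 / 2 : ℝ) ^ 2} ∪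
          {y : ℚ_[2] | ‖y - 1‖ ≤ (1 / 2 : ℝ) ^ 2})) := by
  have e : (1 / 2 : ℝ) ^ 2 = 1 / 4 := by norm_num
  constructor
  · ext x
    simp only [mem_ofPred_eq, mem_union, e]
    exact fatou_iff x
  · ext x
    simp only [mem_ofPred_eq, mem_iInter, mem_preimage, mem_union, e]
    exact fatou_iff x
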